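/- arXiv:1308.5754 — 2 statements merged into one kernel-verified Lean document; each statement's English description precedes it below -/
import Mathlib

section
/- Let A = (1, a_y, a_z) and B = (b_x, 1, b_z) be points of X. Then the geodesic distance d(A,B) equals the minimum of the three quantities α = max{2 − a_y − b_x, |a_z − b_z|}, β = max{2 − a_z − b_x, 2 − a_y − b_z}, and γ = max{2 + a_z − b_x, 2 − a_y + b_z}. -/
open Set
open scoped ENNReal

/-- The geodesic distance between two points on the unit sphere (for the sup norm)
of `Fin n → ℝ`: the infimum over continuous paths `γ : [0,1] → {x : ‖x‖ = 1}` joining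
them of the length of `γ`, i.e. its total variation. -/
noncomputable def geoDist {n : ℕ} (A B : Fin n → ℝ) : ℝ≥0∞ :=
  ⨅ (γ : ℝ → (Fin n → ℝ)) (_ : ContinuousOn γ (Icc 0 1)) (_ : γ 0 = A)
    (_ : γ 1 = B) (_ : ∀ t ∈ Icc (0:ℝ) 1, ‖γ t‖ = 1),
    eVariationOn γ (Icc 0 1)

/-- A segment inside one face of the cube bounds the geodesic distance. -/
lemma geoDist_seg {n : ℕ} (A B : Fin n → ℝ) (r : ℝ) (hA : ∀ i, |A i| ≤ 1) (hB : ∀ i, |B i| ≤ 1)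
    (hi : ∃ i, A i = B i ∧ |A i| = 1) (hr : ∀ i, |A i - B i| ≤ r) :
    geoDist A B ≤ ENNReal.ofReal r := by
  obtain ⟨i, hi1, hi2⟩ := hi
  have hr0 : 0 ≤ r := (abs_nonneg _).trans (hr i)
  have hlip : LipschitzWith (Real.toNNReal r) (fun t : ℝ => (fun j => A j + t * (B j - A j) : Fin n → ℝ)) := by
    apply LipschitzWith.of_dist_le_mul
    intro s t
    rw [Real.coe_toNNReal r hr0]
    refine (dist_pi_le_iff (by positivity)).2 fun j => ?_
    rw [Real.dist_eq, Real.dist_eq]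
    have : A j + s * (B j - A j) - (A j + t * (B j - A j)) = (A j - B j) * (t - s) := by ring
    rw [this, abs_mul, abs_sub_comm t s]
    exact mul_le_mul_of_nonneg_right (hr j) (abs_nonneg _)
  unfold geoDist
  refine iInf_le_of_le (fun t : ℝ => (fun j => A j + t * (B j - A j) : Fin n → ℝ)) ?_
  refine iInf_le_of_le hlip.continuous.continuousOn ?_
  refine iInf_le_of_le (by ext j; simp) ?_
  refine iInf_le_of_le (by ext j; simp) ?_
  refine iInf_le_of_le ?_ ?_
  · intro t ht
    apply le_antisymm
    · refine (pi_norm_le_iff_of_nonneg zero_le_one).2 fun j => ?_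
      have h1 := abs_le.1 (hA j)
      have h2 := abs_le.1 (hB j)
      rw [Real.norm_eq_abs, abs_le]
      obtain ⟨ht0, ht1⟩ := ht
      constructor <;> nlinarith
    · have := norm_le_pi_norm (fun j => A j + t * (B j - A j) : Fin n → ℝ) i
      simpa [← hi1, hi2] using this
  · have h := (hlip.lipschitzOnWith (s := univ)).comp_eVariationOn_le (g := (id : ℝ → ℝ)) (s := Icc 0 1)
      (fun _ _ => mem_univ _)
    refine h.trans ?_
    have h2 : eVariationOn (id : ℝ → ℝ) (Icc 0 1) ≤ 1 := by
      have := (monotone_id.monotoneOn (Icc (0:ℝ) 1)).eVariationOn_le (a := 0) (b := 1) (by simp) (by simp)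
      simpa using this
    calc _ ≤ ((Real.toNNReal r : NNReal) : ℝ≥0∞) * 1 := by gcongr
      _ = ENNReal.ofReal r := by rw [mul_one]; rfl

lemma geoDist_triangle {n : ℕ} (A B C : Fin n → ℝ) :
    geoDist A C ≤ geoDist A B + geoDist B C := by
  conv_rhs => unfold geoDist
  simp only [ENNReal.iInf_add, ENNReal.add_iInf]
  refine le_iInf fun g => le_iInf fun hg => le_iInf fun hg0 => le_iInf fun hg1 => le_iInf fun hgn =>
    le_iInf fun f => le_iInf fun hf => le_iInf fun hf0 => le_iInf fun hf1 => le_iInf fun hfn => ?_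
  have hm1 : MapsTo (fun t : ℝ => 2 * t) (Icc 0 (1/2)) (Icc 0 1) := by
    intro t ht; simp only [mem_Icc] at *; constructor <;> linarith
  have hm2 : MapsTo (fun t : ℝ => 2 * t - 1) (Icc (1/2) 1) (Icc 0 1) := by
    intro t ht; simp only [mem_Icc] at *; constructor <;> linarith
  set h : ℝ → (Fin n → ℝ) := fun t => if t ≤ 1/2 then f (2*t) else g (2*t-1) with hh
  have e1 : EqOn h (f ∘ fun t => 2*t) (Icc 0 (1/2)) := by
    intro t ht; simp only [hh, Function.comp]; rw [if_pos ht.2]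
  have e2 : EqOn h (g ∘ fun t => 2*t-1) (Icc (1/2) 1) := by
    intro t ht; simp only [hh, Function.comp]
    split_ifs with h1
    · have : t = 1/2 := le_antisymm h1 ht.1
      subst this; norm_num [hf1, hg0]
    · rfl
  have hU : Icc (0:ℝ) 1 = Icc 0 (1/2) ∪ Icc (1/2) 1 :=
    (Icc_union_Icc_eq_Icc (by norm_num) (by norm_num)).symm
  unfold geoDist
  refine iInf_le_of_le h ?_
  refine iInf_le_of_le ?_ ?_
  · rw [hU]
    apply ContinuousOn.union_of_isClosed _ _ isClosed_Icc isClosed_Icc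
    · exact (hf.comp (by fun_prop) hm1).congr e1
    · exact (hg.comp (by fun_prop) hm2).congr e2
  refine iInf_le_of_le (by simp [hh, hf0]) ?_
  refine iInf_le_of_le (by norm_num [hh, hg1]) ?_
  refine iInf_le_of_le ?_ ?_
  · intro t ht
    rw [hU] at ht
    rcases ht with ht | ht
    · rw [e1 ht]; exact hfn _ (hm1 ht)
    · rw [e2 ht]; exact hgn _ (hm2 ht)
  · have := eVariationOn.Icc_add_Icc h (s := univ) (a := 0) (b := 1/2) (c := 1) (by norm_num) (by norm_num) (mem_univ _)
    simp only [univ_inter] at this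
    rw [← this, eVariationOn.eq_of_eqOn e1, eVariationOn.eq_of_eqOn e2]
    refine add_le_add ?_ ?_
    · refine eVariationOn.comp_le_of_monotoneOn _ _ (fun a _ b _ hab => ?_) hm1
      linarith
    · refine eVariationOn.comp_le_of_monotoneOn _ _ (fun a _ b _ hab => ?_) hm2
      linarith

lemma upper_alpha (ay az bx bz : ℝ)
    (hay : ay ∈ Icc (-1:ℝ) 1) (haz : az ∈ Icc (-1:ℝ) 1)
    (hbx : bx ∈ Icc (-1:ℝ) 1) (hbz : bz ∈ Icc (-1:ℝ) 1) :
    geoDist ![1, ay, az] ![bx, 1, bz] ≤ ENNReal.ofReal (max (2 - ay - bx) |az - bz|) := by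
  obtain ⟨hay0, hay1⟩ := hay
  obtain ⟨haz0, haz1⟩ := haz
  obtain ⟨hbx0, hbx1⟩ := hbx
  obtain ⟨hbz0, hbz1⟩ := hbz
  obtain ⟨l, hl0, hl1, h1⟩ : ∃ l : ℝ, 0 ≤ l ∧ l ≤ 1 ∧ l * (2 - ay - bx) = 1 - ay := by
    rcases eq_or_lt_of_le (show 0 ≤ 2 - ay - bx by linarith) with h | h
    · exact ⟨0, le_rfl, zero_le_one, by linarith⟩
    · refine ⟨(1 - ay) / (2 - ay - bx), div_nonneg (by linarith) h.le, ?_, by field_simp⟩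
      rw [div_le_one h]; linarith
  set M := max (2 - ay - bx) |az - bz| with hM
  have hM1 : 2 - ay - bx ≤ M := le_max_left _ _
  have hM2 : |az - bz| ≤ M := le_max_right _ _
  have hM3 := abs_le.1 hM2
  have hM0 : 0 ≤ M := (abs_nonneg _).trans hM2
  have hc : |az + l * (bz - az)| ≤ 1 := by rw [abs_le]; constructor <;> nlinarith
  have s1 : geoDist ![1, ay, az] ![1, 1, az + l * (bz - az)] ≤ ENNReal.ofReal (l * M) := by
    apply geoDist_seg
    · intro i; fin_cases i <;> simp [abs_le, *]
    · intro i; fin_cases i <;> simp [hc]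
    · exact ⟨0, by simp⟩
    · intro i; fin_cases i
      · simp; positivity
      · simp [abs_le]; constructor <;> nlinarith
      · simp [abs_mul, abs_of_nonneg hl0, abs_sub_comm bz az]
        exact mul_le_mul_of_nonneg_left hM2 hl0
  have s2 : geoDist ![1, 1, az + l * (bz - az)] ![bx, 1, bz] ≤ ENNReal.ofReal ((1 - l) * M) := by
    have hl2 : 0 ≤ 1 - l := by linarith
    apply geoDist_seg
    · intro i; fin_cases i <;> simp [hc]
    · intro i; fin_cases i <;> simp [abs_le, *]
    · exact ⟨1, by simp⟩
    · intro i; fin_cases i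
      · simp [abs_le]; constructor <;> nlinarith
      · simp; positivity
      · simp [abs_le]; constructor <;> nlinarith
  calc _ ≤ _ := geoDist_triangle _ ![1, 1, az + l * (bz - az)] _
    _ ≤ _ := add_le_add s1 s2
    _ = ENNReal.ofReal M := by
      rw [← ENNReal.ofReal_add (by positivity) (mul_nonneg (by linarith) hM0)]
      congr 1; ring

lemma upper_beta (e ay az bx bz : ℝ) (he : e = 1 ∨ e = -1)
    (hay : ay ∈ Icc (-1:ℝ) 1) (haz : az ∈ Icc (-1:ℝ) 1)
    (hbx : bx ∈ Icc (-1:ℝ) 1) (hbz : bz ∈ Icc (-1:ℝ) 1) :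
    geoDist ![1, ay, az] ![bx, 1, bz] ≤ ENNReal.ofReal
      (max (2 - e * az - e * bz) (max (2 - e * az - bx) (2 - ay - e * bz))) := by
  obtain ⟨hay0, hay1⟩ := hay
  obtain ⟨haz0, haz1⟩ := haz
  obtain ⟨hbx0, hbx1⟩ := hbx
  obtain ⟨hbz0, hbz1⟩ := hbz
  have he1 : |e| = 1 := by rcases he with rfl | rfl <;> simp
  have ha : 0 ≤ 1 - e * az := by rcases he with rfl | rfl <;> linarith
  have hb : 0 ≤ 1 - e * bz := by rcases he with rfl | rfl <;> linarith
  have ha' : |az - e| ≤ 1 - e * az := by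
    rw [abs_le]; rcases he with rfl | rfl <;> constructor <;> linarith
  have hb' : |e - bz| ≤ 1 - e * bz := by
    rw [abs_le]; rcases he with rfl | rfl <;> constructor <;> linarith
  obtain ⟨p, hp0, hp1, hp2, hp3⟩ : ∃ p, ay ≤ p ∧ p ≤ 1 ∧ p - ay ≤ 1 - e * az ∧
      (p = 1 ∨ p = ay + 1 - e * az) := by
    rcases le_total (ay + 1 - e * az) 1 with h | h
    · exact ⟨ay + 1 - e * az, by linarith, h, by linarith, Or.inr rfl⟩
    · exact ⟨1, hay1, le_rfl, by linarith, Or.inl rfl⟩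
  obtain ⟨q, hq0, hq1, hq2, hq3⟩ : ∃ q, bx ≤ q ∧ q ≤ 1 ∧ q - bx ≤ 1 - e * bz ∧
      (q = 1 ∨ q = bx + 1 - e * bz) := by
    rcases le_total (bx + 1 - e * bz) 1 with h | h
    · exact ⟨bx + 1 - e * bz, by linarith, h, by linarith, Or.inr rfl⟩
    · exact ⟨1, hbx1, le_rfl, by linarith, Or.inl rfl⟩
  have hp : |p| ≤ 1 := abs_le.2 ⟨by linarith, hp1⟩
  have hq : |q| ≤ 1 := abs_le.2 ⟨by linarith, hq1⟩
  have hA : ∀ i, |(![1, ay, az] : Fin 3 → ℝ) i| ≤ 1 := by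
    intro i; fin_cases i <;> simp [abs_le, *]
  have hB : ∀ i, |(![bx, 1, bz] : Fin 3 → ℝ) i| ≤ 1 := by
    intro i; fin_cases i <;> simp [abs_le, *]
  have hP : ∀ i, |(![1, p, e] : Fin 3 → ℝ) i| ≤ 1 := by
    intro i; fin_cases i <;> simp [hp, he1.le]
  have hQ : ∀ i, |(![q, 1, e] : Fin 3 → ℝ) i| ≤ 1 := by
    intro i; fin_cases i <;> simp [hq, he1.le]
  have s1 : geoDist ![1, ay, az] ![1, p, e] ≤ ENNReal.ofReal (1 - e * az) := by
    refine geoDist_seg _ _ _ hA hP ⟨0, by simp⟩ ?_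
    intro i; fin_cases i
    · simpa using ha
    · simp only [Fin.mk_one, Matrix.cons_val]
      rw [abs_le]; constructor <;> linarith
    · simpa using ha'
  have s2 : geoDist ![1, p, e] ![q, 1, e] ≤ ENNReal.ofReal (max (1 - p) (1 - q)) := by
    have m1 := le_max_left (1 - p) (1 - q)
    have m2 := le_max_right (1 - p) (1 - q)
    refine geoDist_seg _ _ _ hP hQ ⟨2, by simp [he1]⟩ ?_
    intro i; fin_cases i
    · simp only [Fin.zero_eta, Matrix.cons_val]
      rw [abs_le]; constructor <;> linarith
    · simp only [Fin.mk_one, Matrix.cons_val]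
      rw [abs_le]; constructor <;> linarith
    · simp only [Fin.reduceFinMk, Matrix.cons_val, sub_self, abs_zero]
      linarith
  have s3 : geoDist ![q, 1, e] ![bx, 1, bz] ≤ ENNReal.ofReal (1 - e * bz) := by
    refine geoDist_seg _ _ _ hQ hB ⟨1, by simp⟩ ?_
    intro i; fin_cases i
    · simp only [Fin.zero_eta, Matrix.cons_val]
      rw [abs_le]; constructor <;> linarith
    · simpa using hb
    · simpa using hb'
  have m0 : 0 ≤ max (1 - p) (1 - q) := le_max_of_le_left (by linarith)
  calc _ ≤ _ := geoDist_triangle _ ![1, p, e] _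
    _ ≤ _ := add_le_add_right (geoDist_triangle _ ![q, 1, e] _) _
    _ ≤ _ := add_le_add s1 (add_le_add s2 s3)
    _ = ENNReal.ofReal ((1 - e * az) + (max (1 - p) (1 - q) + (1 - e * bz))) := by
      rw [← ENNReal.ofReal_add m0 hb, ← ENNReal.ofReal_add ha (by linarith)]
    _ ≤ _ := by
      apply ENNReal.ofReal_le_ofReal
      have n1 := le_max_left (2 - e * az - e * bz) (max (2 - e * az - bx) (2 - ay - e * bz))
      have n2 := le_max_right (2 - e * az - e * bz) (max (2 - e * az - bx) (2 - ay - e * bz))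
      have n3 := le_max_left (2 - e * az - bx) (2 - ay - e * bz)
      have n4 := le_max_right (2 - e * az - bx) (2 - ay - e * bz)
      rcases max_choice (1 - p) (1 - q) with h | h <;> rw [h]
      · rcases hp3 with h | h <;> linarith
      · rcases hq3 with h | h <;> linarith

/-- Length lower bound through one intermediate time. -/
lemma length_ge (f : ℝ → (Fin 3 → ℝ)) (t : ℝ) (ht : t ∈ Icc (0:ℝ) 1) (i j : Fin 3) (r : ℝ)
    (hr : r ≤ |f 0 i - f t i| + |f t j - f 1 j|) :
    ENNReal.ofReal r ≤ eVariationOn f (Icc 0 1) := by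
  have := eVariationOn.Icc_add_Icc f (s := univ) ht.1 ht.2 (mem_univ _)
  simp only [univ_inter] at this
  rw [← this]
  have a1 : ENNReal.ofReal |f 0 i - f t i| ≤ eVariationOn f (Icc 0 t) := by
    refine le_trans ?_ (eVariationOn.edist_le f (x := 0) (y := t) ⟨le_rfl, ht.1⟩ ⟨ht.1, le_rfl⟩)
    rw [← Real.dist_eq, ← edist_dist]
    exact edist_le_pi_edist _ _ _
  have a2 : ENNReal.ofReal |f t j - f 1 j| ≤ eVariationOn f (Icc t 1) := by
    refine le_trans ?_ (eVariationOn.edist_le f (x := t) (y := 1) ⟨le_rfl, ht.2⟩ ⟨ht.2, le_rfl⟩)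
    rw [← Real.dist_eq, ← edist_dist]
    exact edist_le_pi_edist _ _ _
  refine le_trans (ENNReal.ofReal_le_ofReal hr) ?_
  rw [ENNReal.ofReal_add (abs_nonneg _) (abs_nonneg _)]
  exact add_le_add a1 a2

lemma lower_bound (ay az bx bz : ℝ)
    (hay : ay ∈ Icc (-1:ℝ) 1) (haz : az ∈ Icc (-1:ℝ) 1)
    (hbx : bx ∈ Icc (-1:ℝ) 1) (hbz : bz ∈ Icc (-1:ℝ) 1)
    (f : ℝ → (Fin 3 → ℝ)) (hf : ContinuousOn f (Icc 0 1)) (hf0 : f 0 = ![1, ay, az])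
    (hf1 : f 1 = ![bx, 1, bz]) (hfn : ∀ t ∈ Icc (0:ℝ) 1, ‖f t‖ = 1) :
    ENNReal.ofReal
        (min (max (2 - ay - bx) |az - bz|)
          (min (max (2 - az - bx) (2 - ay - bz))
            (max (2 + az - bx) (2 - ay + bz)))) ≤ eVariationOn f (Icc 0 1) := by
  obtain ⟨hay0, hay1⟩ := hay
  obtain ⟨haz0, haz1⟩ := haz
  obtain ⟨hbx0, hbx1⟩ := hbx
  obtain ⟨hbz0, hbz1⟩ := hbz
  have x0 : f 0 0 = 1 := by simp [hf0]
  have y0 : f 0 1 = ay := by simp [hf0]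
  have z0 : f 0 2 = az := by simp [hf0]
  have x1 : f 1 0 = bx := by simp [hf1]
  have y1 : f 1 1 = 1 := by simp [hf1]
  have z1 : f 1 2 = bz := by simp [hf1]
  have hc : ∀ i, ContinuousOn (fun t => f t i) (Icc 0 1) := fun i =>
    (continuous_apply i).comp_continuousOn hf
  -- reduction to one of three families of bounds
  have alpha : ENNReal.ofReal (2 - ay - bx) ≤ eVariationOn f (Icc 0 1) →
      ENNReal.ofReal (min (max (2 - ay - bx) |az - bz|)
          (min (max (2 - az - bx) (2 - ay - bz))
            (max (2 + az - bx) (2 - ay + bz)))) ≤ eVariationOn f (Icc 0 1) := by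
    intro h
    refine (ENNReal.ofReal_le_ofReal (min_le_left _ _)).trans ?_
    rw [ENNReal.ofReal_max]
    refine max_le h (length_ge f 1 ⟨zero_le_one, le_rfl⟩ 2 2 _ ?_)
    simp [z0, z1]
  have four : ∀ t ∈ Icc (0:ℝ) 1, f t 0 = -1 → f t 1 = -1 →
      ENNReal.ofReal (2 - ay - bx) ≤ eVariationOn f (Icc 0 1) := by
    intro t ht h h'
    refine length_ge f t ht 0 1 _ ?_
    rw [h, h', x0, y1]
    have : |(1:ℝ) - -1| + |(-1:ℝ) - 1| = 4 := by norm_num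
    linarith
  have corner : ∀ t ∈ Icc (0:ℝ) 1, f t 0 = 1 → f t 1 = 1 →
      ENNReal.ofReal (2 - ay - bx) ≤ eVariationOn f (Icc 0 1) := by
    intro t ht h h'
    refine length_ge f t ht 1 0 _ ?_
    rw [h, h', y0, x1]
    linarith [neg_le_abs (ay - 1), le_abs_self (1 - bx)]
  -- the set of times where `y = 1` or `x = -1`
  set Q : Set ℝ := {t ∈ Icc (0:ℝ) 1 | (f t 1 - 1) * (f t 0 + 1) = 0} with hQ
  have hQc : IsCompact Q := by
    refine isCompact_Icc.of_isClosed_subset ?_ (fun t ht => ht.1)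
    have : ContinuousOn (fun t => (f t 1 - 1) * (f t 0 + 1)) (Icc 0 1) :=
      ((hc 1).sub continuousOn_const).mul ((hc 0).add continuousOn_const)
    exact this.preimage_isClosed_of_isClosed isClosed_Icc isClosed_singleton
  obtain ⟨u, huQ, hu⟩ := hQc.exists_isLeast ⟨1, ⟨zero_le_one, le_rfl⟩, by simp [y1]⟩
  have hu01 := huQ.1
  set P : Set ℝ := {t ∈ Icc (0:ℝ) u | (f t 0 - 1) * (f t 1 + 1) = 0} with hP
  have hsub : Icc (0:ℝ) u ⊆ Icc 0 1 := Icc_subset_Icc_right hu01.2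
  have hPc : IsCompact P := by
    refine isCompact_Icc.of_isClosed_subset ?_ (fun t ht => ht.1)
    have : ContinuousOn (fun t => (f t 0 - 1) * (f t 1 + 1)) (Icc 0 u) :=
      (((hc 0).sub continuousOn_const).mul ((hc 1).add continuousOn_const)).mono hsub
    exact this.preimage_isClosed_of_isClosed isClosed_Icc isClosed_singleton
  obtain ⟨v, hvP, hv⟩ := hPc.exists_isGreatest ⟨0, ⟨le_rfl, hu01.1⟩, by simp [x0]⟩
  have hv01 := hsub hvP.1
  have hvu : v ≤ u := hvP.1.2
  have hvP' : f v 0 = 1 ∨ f v 1 = -1 := by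
    rcases mul_eq_zero.1 hvP.2 with h | h
    · left; linarith
    · right; linarith
  have huQ' : f u 1 = 1 ∨ f u 0 = -1 := by
    rcases mul_eq_zero.1 huQ.2 with h | h
    · left; linarith
    · right; linarith
  rcases eq_or_lt_of_le hvu with hEq | hlt
  · subst hEq
    apply alpha
    rcases hvP' with h | h <;> rcases huQ' with h' | h'
    · exact corner v hv01 h h'
    · linarith
    · linarith
    · exact four v hv01 h' h
  have hsub2 : Icc v u ⊆ Icc 0 1 := Icc_subset_Icc hv01.1 hu01.2
  have hz1 : ∀ t ∈ Ioo v u, f t 2 * f t 2 = 1 := by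
    intro t ht
    have ht01 : t ∈ Icc (0:ℝ) 1 := hsub2 ⟨ht.1.le, ht.2.le⟩
    have nQ : ¬ (f t 1 - 1) * (f t 0 + 1) = 0 := fun h => absurd (hu ⟨ht01, h⟩) (not_le.2 ht.2)
    have nP : ¬ (f t 0 - 1) * (f t 1 + 1) = 0 := fun h =>
      absurd (hv ⟨⟨ht01.1, ht.2.le⟩, h⟩) (not_le.2 ht.1)
    have hn := hfn t ht01
    obtain ⟨i, hi⟩ : ∃ i, |f t i| = 1 := by
      by_contra! hcon
      have : ‖f t‖ < 1 := by
        refine (pi_norm_lt_iff one_pos).2 fun i => lt_of_le_of_ne ?_ (hcon i)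
        rw [← hn]; exact norm_le_pi_norm (f t) i
      linarith
    rcases eq_or_eq_neg_of_abs_eq hi with h | h
    · fin_cases i
      · exact absurd (by simp at h; simp [h]) nP
      · exact absurd (by simp at h; simp [h]) nQ
      · simp at h; simp [h]
    · fin_cases i
      · exact absurd (by simp at h; simp [h]) nQ
      · exact absurd (by simp at h; simp [h]) nP
      · simp at h; simp [h]
  have hcz : ContinuousOn (fun t => f t 2) (Icc v u) := (hc 2).mono hsub2
  have hz2 : ∀ t ∈ Icc v u, f t 2 * f t 2 = 1 := by
    have : EqOn (fun t => f t 2 * f t 2) (fun _ => (1:ℝ)) (Icc v u) :=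
      EqOn.of_subset_closure (s := Ioo v u) (fun t ht => hz1 t ht) (hcz.mul hcz)
        continuousOn_const Ioo_subset_Icc_self (by rw [closure_Ioo hlt.ne])
    exact this
  have hvm : v ∈ Icc v u := ⟨le_rfl, hvu⟩
  have hum : u ∈ Icc v u := ⟨hvu, le_rfl⟩
  have no0 : ∀ t ∈ Icc v u, f t 2 ≠ 0 := fun t ht h => by
    have := hz2 t ht; rw [h] at this; norm_num at this
  have hsame : f v 2 = f u 2 := by
    rcases mul_self_eq_one_iff.1 (hz2 v hvm) with h | h <;>
      rcases mul_self_eq_one_iff.1 (hz2 u hum) with h' | h'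
    · rw [h, h']
    · obtain ⟨t, ht, h0⟩ := intermediate_value_Icc' hvu hcz (show (0:ℝ) ∈ Icc (f u 2) (f v 2) by
        rw [h, h']; norm_num)
      exact absurd h0 (no0 t ht)
    · obtain ⟨t, ht, h0⟩ := intermediate_value_Icc hvu hcz (show (0:ℝ) ∈ Icc (f v 2) (f u 2) by
        rw [h, h']; norm_num)
      exact absurd h0 (no0 t ht)
    · rw [h, h']
  have b1 : ENNReal.ofReal (|az - f v 2| + (1 - bx)) ≤ eVariationOn f (Icc 0 1) := by
    rcases hvP' with h | h
    · refine length_ge f v hv01 2 0 _ ?_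
      rw [z0, h, x1]; linarith [le_abs_self (1 - bx)]
    · refine length_ge f v hv01 2 1 _ ?_
      rw [z0, h, y1]; linarith [neg_le_abs ((-1:ℝ) - 1)]
  have b2 : ENNReal.ofReal ((1 - ay) + |f v 2 - bz|) ≤ eVariationOn f (Icc 0 1) := by
    rw [hsame]
    rcases huQ' with h | h
    · refine length_ge f u hu01 1 2 _ ?_
      rw [z1, h, y0]; linarith [neg_le_abs (ay - 1)]
    · refine length_ge f u hu01 0 2 _ ?_
      rw [z1, h, x0]; linarith [le_abs_self ((1:ℝ) - -1)]
  rcases mul_self_eq_one_iff.1 (hz2 v hvm) with h | h <;> rw [h] at b1 b2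
  · refine (ENNReal.ofReal_le_ofReal ((min_le_right _ _).trans (min_le_left _ _))).trans ?_
    rw [ENNReal.ofReal_max]
    refine max_le (le_trans (ENNReal.ofReal_le_ofReal ?_) b1)
      (le_trans (ENNReal.ofReal_le_ofReal ?_) b2)
    · linarith [neg_le_abs (az - 1)]
    · linarith [le_abs_self (1 - bz)]
  · refine (ENNReal.ofReal_le_ofReal ((min_le_right _ _).trans (min_le_right _ _))).trans ?_
    rw [ENNReal.ofReal_max]
    refine max_le (le_trans (ENNReal.ofReal_le_ofReal ?_) b1)
      (le_trans (ENNReal.ofReal_le_ofReal ?_) b2)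
    · linarith [le_abs_self (az - -1)]
    · linarith [neg_le_abs (-1 - bz)]

/-- If the third term dominates in `upper_beta`, the edge path is already as short. -/
lemma max_cmp (ay az bx bz c d : ℝ) (hbx1 : bx ≤ 1) (hay1 : ay ≤ 1)
    (hcd : |az - bz| = |c - d|) :
    min (max (2 - ay - bx) |az - bz|) (max (2 - c - d) (max (2 - c - bx) (2 - ay - d))) ≤
      max (2 - c - bx) (2 - ay - d) := by
  have n3 := le_max_left (2 - c - bx) (2 - ay - d)
  have n4 := le_max_right (2 - c - bx) (2 - ay - d)
  rcases le_total (2 - c - d) (max (2 - c - bx) (2 - ay - d)) with h | h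
  · rw [max_eq_right h]; exact min_le_right _ _
  · refine (min_le_left _ _).trans ?_
    rw [hcd]
    refine max_le (by linarith) ?_
    rw [abs_le]; constructor <;> linarith

theorem statement0 (ay az bx bz : ℝ)
    (hay : ay ∈ Icc (-1:ℝ) 1) (haz : az ∈ Icc (-1:ℝ) 1)
    (hbx : bx ∈ Icc (-1:ℝ) 1) (hbz : bz ∈ Icc (-1:ℝ) 1) :
    geoDist ![1, ay, az] ![bx, 1, bz] =
      ENNReal.ofReal
        (min (max (2 - ay - bx) |az - bz|)
          (min (max (2 - az - bx) (2 - ay - bz))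
            (max (2 + az - bx) (2 - ay + bz)))) := by
  apply le_antisymm
  · have hα := upper_alpha ay az bx bz hay haz hbx hbz
    rw [ENNReal.ofReal_min, ENNReal.ofReal_min]
    refine le_min hα (le_min ?_ ?_)
    · have h := upper_beta 1 ay az bx bz (Or.inl rfl) hay haz hbx hbz
      have hm := max_cmp ay az bx bz (1 * az) (1 * bz) hbx.2 hay.2 (by simp)
      have := (le_min hα h).trans ((ENNReal.ofReal_min _ _).ge.trans (ENNReal.ofReal_le_ofReal hm))
      simpa using this
    · have h := upper_beta (-1) ay az bx bz (Or.inr rfl) hay haz hbx hbz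
      have hm := max_cmp ay az bx bz (-1 * az) (-1 * bz) hbx.2 hay.2
        (by rw [← abs_neg]; congr 1; ring)
      have := (le_min hα h).trans ((ENNReal.ofReal_min _ _).ge.trans (ENNReal.ofReal_le_ofReal hm))
      simpa using this
  · exact le_iInf fun f => le_iInf fun hf => le_iInf fun hf0 => le_iInf fun hf1 => le_iInf fun hfn =>
      lower_bound ay az bx bz hay haz hbx hbz f hf hf0 hf1 hfn
end

section
/- Let A = (1, a_y, a_z) and B = (b_x, 1, b_z) be points of X. Then there exists a point C = (1, 1, z) with z ∈ [−1,1] such that ‖A − C‖∞ + ‖C − B‖∞ equals the geodesic distance d(A,B) (i.e., there is a shortest path from A to B consisting of at most two line segments through the edge {(1,1,z) : |z| ≤ 1}) if and only if at least one of the following four conditions holds: (1) |a_z| ≤ a_y; (2) |b_z| ≤ b_x; (3) |a_y| ≤ a_z and |b_x| ≤ −b_z; (4) |a_y| ≤ −a_z and |b_x| ≤ b_z. -/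
open Set
open scoped ENNReal

lemma norm_fin3 (v : Fin 3 → ℝ) : ‖v‖ = max |v 0| (max |v 1| |v 2|) := by
  apply le_antisymm
  · rw [pi_norm_le_iff_of_nonneg (by positivity)]
    intro i
    fin_cases i <;> simp [Real.norm_eq_abs]
  · refine max_le ?_ (max_le ?_ ?_)
    · exact norm_le_pi_norm v 0
    · exact norm_le_pi_norm v 1
    · exact norm_le_pi_norm v 2

/-- The face of the cube where coordinate `i` equals `s`. -/
def cubeFace (p : Fin 3 × Bool) : Set (Fin 3 → ℝ) :=
  {v | ‖v‖ ≤ 1 ∧ v p.1 = if p.2 then 1 else -1}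

lemma isClosed_cubeFace (p : Fin 3 × Bool) : IsClosed (cubeFace p) := by
  apply IsClosed.inter
  · exact isClosed_le continuous_norm continuous_const
  · exact isClosed_eq (continuous_apply _) continuous_const

lemma exists_cubeFace (v : Fin 3 → ℝ) (hv : ‖v‖ = 1) : ∃ p, v ∈ cubeFace p := by
  have h : ∃ i, |v i| = 1 := by
    rw [norm_fin3] at hv
    rcases max_choice |v 0| (max |v 1| |v 2|) with h | h
    · exact ⟨0, by rw [← h, hv]⟩
    · rcases max_choice |v 1| |v 2| with h_p | h_p
      · exact ⟨1, by rw [← h_p, ← h, hv]⟩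
      · exact ⟨2, by rw [← h_p, ← h, hv]⟩
  obtain ⟨i, hi⟩ := h
  rcases (abs_eq zero_le_one).1 hi with h | h
  · exact ⟨(i, true), hv.le, by simpa using h⟩
  · exact ⟨(i, false), hv.le, by simpa using h⟩

lemma norm_eq_one_of_cubeFace {v : Fin 3 → ℝ} {p} (hv : v ∈ cubeFace p) : ‖v‖ = 1 := by
  refine le_antisymm hv.1 ?_
  have h := norm_le_pi_norm v p.1
  rw [hv.2] at h
  split_ifs at h <;> simpa using h

/-- Greedy argument: jump to the last time in the current face. -/
lemma edist_le_variation {ι E : Type*} [DecidableEq ι] [PseudoEMetricSpace E]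
    (F : ι → Set E) (hF : ∀ i, IsClosed (F i))
    (φ : E → ℝ) (hφ : ∀ i, ∀ P ∈ F i, ∀ Q ∈ F i, edist (φ P) (φ Q) ≤ edist P Q)
    (γ : ℝ → E) (b : ℝ) (S : Finset ι) :
    ∀ a ≤ b, ContinuousOn γ (Icc a b) → (∀ t ∈ Icc a b, ∃ i ∈ S, γ t ∈ F i) →
      edist (φ (γ a)) (φ (γ b)) ≤ eVariationOn γ (Icc a b) := by
  induction S using Finset.strongInduction with
  | H S ih =>
    intro a hab hc hcov
    obtain ⟨i, hiS, hi⟩ := hcov a ⟨le_rfl, hab⟩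
    have hcl : ∀ j, IsClosed (Icc a b ∩ γ ⁻¹' F j) := fun j =>
      hc.preimage_isClosed_of_isClosed isClosed_Icc (hF j)
    have hcomp : IsCompact (Icc a b ∩ γ ⁻¹' F i) :=
      isCompact_Icc.of_isClosed_subset (hcl i) inter_subset_left
    obtain ⟨t, ⟨⟨hat, htb⟩, hti⟩, htmax⟩ :=
      hcomp.exists_isGreatest ⟨a, ⟨le_rfl, hab⟩, hi⟩
    have hsplit : eVariationOn γ (Icc a t) + eVariationOn γ (Icc t b)
        = eVariationOn γ (Icc a b) := by
      have := eVariationOn.Icc_add_Icc γ (s := univ) hat htb (mem_univ t)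
      simpa using this
    have h1 : edist (φ (γ a)) (φ (γ t)) ≤ eVariationOn γ (Icc a t) :=
      (hφ i _ hi _ hti).trans (eVariationOn.edist_le γ ⟨le_rfl, hat⟩ ⟨hat, le_rfl⟩)
    have h2 : edist (φ (γ t)) (φ (γ b)) ≤ eVariationOn γ (Icc t b) := by
      rcases htb.eq_or_lt with rfl | hlt
      · simp
      · refine ih (S.erase i) (Finset.erase_ssubset hiS) t htb
          (hc.mono (Icc_subset_Icc_left hat)) ?_
        have hclU : IsClosed (⋃ j ∈ S.erase i, (Icc a b ∩ γ ⁻¹' F j)) :=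
          isClosed_biUnion_finset fun j _ => hcl j
        have hsub : Ioc t b ⊆ ⋃ j ∈ S.erase i, (Icc a b ∩ γ ⁻¹' F j) := by
          intro s hs
          have hsab : s ∈ Icc a b := ⟨hat.trans hs.1.le, hs.2⟩
          obtain ⟨j, hjS, hj⟩ := hcov s hsab
          have hji : j ≠ i := by
            rintro rfl
            exact absurd (htmax ⟨hsab, hj⟩) (not_le.2 hs.1)
          exact mem_biUnion (x := j) (Finset.mem_coe.2 (Finset.mem_erase.2 ⟨hji, hjS⟩)) ⟨hsab, hj⟩
        have hsub2 := closure_minimal hsub hclU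
        rw [closure_Ioc hlt.ne] at hsub2
        intro s hs
        have := hsub2 hs
        simp only [mem_iUnion] at this
        obtain ⟨j, hj, hj_p⟩ := this
        exact ⟨j, hj, hj_p.2⟩
    calc _ ≤ _ := edist_triangle _ (φ (γ t)) _
      _ ≤ _ := add_le_add h1 h2
      _ = _ := hsplit

lemma geoDist_ge (φ : (Fin 3 → ℝ) → ℝ)
    (hφ : ∀ i, ∀ P ∈ cubeFace i, ∀ Q ∈ cubeFace i, φ P - φ Q ≤ ‖P - Q‖)
    (A B : Fin 3 → ℝ) : ENNReal.ofReal (φ B - φ A) ≤ geoDist A B := by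
  unfold geoDist
  refine le_iInf fun γ => le_iInf fun hc => le_iInf fun h0 => le_iInf fun h1 => le_iInf fun hn => ?_
  have := edist_le_variation cubeFace isClosed_cubeFace φ ?_ γ 1 Finset.univ 0 zero_le_one hc ?_
  · refine le_trans ?_ this
    rw [h0, h1, edist_dist, dist_comm, Real.dist_eq]
    exact ENNReal.ofReal_le_ofReal (le_abs_self _)
  · intro i P hP Q hQ
    rw [edist_dist, edist_dist, Real.dist_eq, dist_eq_norm]
    refine ENNReal.ofReal_le_ofReal (abs_le'.2 ⟨hφ i P hP Q hQ, ?_⟩)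
    rw [norm_sub_rev, neg_sub]
    exact hφ i Q hQ P hP
  · intro t ht
    obtain ⟨p, hp⟩ := exists_cubeFace _ (hn t ht)
    exact ⟨p, Finset.mem_univ _, hp⟩

lemma geoDist_ge_norm (A B : Fin 3 → ℝ) : ENNReal.ofReal ‖A - B‖ ≤ geoDist A B := by
  unfold geoDist
  refine le_iInf fun γ => le_iInf fun hc => le_iInf fun h0 => le_iInf fun h1 => le_iInf fun hn => ?_
  have := eVariationOn.edist_le γ (s := Icc (0:ℝ) 1) (x := 0) (y := 1) (by simp) (by simp)
  rwa [h0, h1, edist_dist, dist_eq_norm] at this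

lemma geoDist_le_segment {p} {A B : Fin 3 → ℝ} (hA : A ∈ cubeFace p) (hB : B ∈ cubeFace p) :
    geoDist A B ≤ ENNReal.ofReal ‖A - B‖ := by
  unfold geoDist
  have hL : LipschitzWith (nndist A B) (AffineMap.lineMap A B : ℝ → (Fin 3 → ℝ)) :=
    lipschitzWith_lineMap A B
  refine (iInf_le_of_le (AffineMap.lineMap A B : ℝ → (Fin 3 → ℝ)) <|
    iInf_le_of_le hL.continuous.continuousOn <| iInf_le_of_le (by simp) <|
    iInf_le_of_le (by simp) <| iInf_le_of_le ?_ ?_)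
  · intro t ht
    have hconv : Convex ℝ (cubeFace p) := by
      intro u hu v hv a b ha hb hab
      refine ⟨?_, ?_⟩
      · have := convex_closedBall (0 : Fin 3 → ℝ) 1 (x := u) (by simpa using hu.1)
          (y := v) (by simpa using hv.1) ha hb hab
        simpa using this
      · simp only [Pi.add_apply, Pi.smul_apply, smul_eq_mul, hu.2, hv.2]
        rw [← add_mul, hab, one_mul]
    exact norm_eq_one_of_cubeFace (hconv.lineMap_mem hA hB ht)
  · have h1 := (hL.lipschitzOnWith (s := univ)).comp_eVariationOn_le
      (g := (id : ℝ → ℝ)) (s := Icc (0:ℝ) 1) (fun _ _ => mem_univ _)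
    have h2 : eVariationOn (id : ℝ → ℝ) (Icc (0:ℝ) 1) ≤ 1 := by
      have := (monotone_id (α := ℝ)).monotoneOn (Icc (0:ℝ) 1) |>.eVariationOn_eq
        (a := 0) (b := 1) (by simp) (by simp)
      rw [inter_self] at this
      simp [this]
    refine h1.trans ((mul_le_mul_right h2 _).trans ?_)
    rw [mul_one, ← dist_eq_norm, ← edist_dist, edist_nndist]

lemma norm_sub3 (P Q : Fin 3 → ℝ) :
    ‖P - Q‖ = max |P 0 - Q 0| (max |P 1 - Q 1| |P 2 - Q 2|) := by
  rw [norm_fin3]; rfl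

lemma mem_face_iff (v : Fin 3 → ℝ) (p) : v ∈ cubeFace p ↔
    (|v 0| ≤ 1 ∧ |v 1| ≤ 1 ∧ |v 2| ≤ 1) ∧ v p.1 = if p.2 then 1 else -1 := by
  unfold cubeFace
  rw [mem_ofPred_eq, norm_fin3, max_le_iff, max_le_iff]

/-- The potential for conditions (1) and (2). -/
lemma pot1 (i j k : Fin 3) (hijk : (i = 0 ∧ j = 1 ∧ k = 2) ∨ (i = 1 ∧ j = 0 ∧ k = 2))
    (p : Fin 3 × Bool) (P : Fin 3 → ℝ) (hP : P ∈ cubeFace p) (Q : Fin 3 → ℝ)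
    (hQ : Q ∈ cubeFace p) :
    |(max |P j| |P k| - P i) - (max |Q j| |Q k| - Q i)| ≤ ‖P - Q‖ := by
  rw [mem_face_iff] at hP hQ
  rw [norm_sub3]
  obtain ⟨⟨p0, p1, p2⟩, p3⟩ := hP
  obtain ⟨⟨q0, q1, q2⟩, q3⟩ := hQ
  obtain ⟨l, s⟩ := p
  have h0 := le_max_left |P 0 - Q 0| (max |P 1 - Q 1| |P 2 - Q 2|)
  have h12 := le_max_right |P 0 - Q 0| (max |P 1 - Q 1| |P 2 - Q 2|)
  have h1 := (le_max_left |P 1 - Q 1| |P 2 - Q 2|).trans h12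
  have h2 := (le_max_right |P 1 - Q 1| |P 2 - Q 2|).trans h12
  generalize max |P 0 - Q 0| (max |P 1 - Q 1| |P 2 - Q 2|) = d at *
  clear h12
  have a0 := abs_abs_sub_abs_le (P 0) (Q 0)
  have a1 := abs_abs_sub_abs_le (P 1) (Q 1)
  have a2 := abs_abs_sub_abs_le (P 2) (Q 2)
  have b0 := (abs_max_sub_max_le_max |P 0| |P 2| |Q 0| |Q 2|).trans
    (max_le (a0.trans h0) (a2.trans h2))
  have b1 := (abs_max_sub_max_le_max |P 1| |P 2| |Q 1| |Q 2|).trans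
    (max_le (a1.trans h1) (a2.trans h2))
  rcases hijk with ⟨rfl, rfl, rfl⟩ | ⟨rfl, rfl, rfl⟩ <;> fin_cases l <;> cases s <;>
    simp at p3 q3 <;> simp only [p3, q3] at * <;> clear p3 q3 <;>
    simp only [abs_neg, abs_one, max_eq_left, max_eq_right, *] at * <;>
    simpa [abs_sub_comm] using ‹_›

lemma pot2_core (a b c a_p b_p c_p d : ℝ) (ha : |a| ≤ 1) (hb : |b| ≤ 1) (hc : |c| ≤ 1)
    (ha_p : |a_p| ≤ 1) (hb_p : |b_p| ≤ 1) (hc_p : |c_p| ≤ 1)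
    (h1 : |a - a_p| ≤ d) (h2 : |b - b_p| ≤ d) (h3 : |c - c_p| ≤ d)
    (h : ((a = 1 ∧ a_p = 1) ∨ (b = 1 ∧ b_p = 1) ∨ (c = 1 ∧ c_p = 1)) ∨
      ((a = -1 ∧ a_p = -1) ∨ (b = -1 ∧ b_p = -1) ∨ (c = -1 ∧ c_p = -1))) :
    -(max a (max b c) + min a (min b c)) + (max a_p (max b_p c_p) + min a_p (min b_p c_p)) ≤ d := by
  have hM := (abs_max_sub_max_le_max a (max b c) a_p (max b_p c_p)).trans
    (max_le h1 ((abs_max_sub_max_le_max b c b_p c_p).trans (max_le h2 h3)))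
  have hm := (abs_min_sub_min_le_max a (min b c) a_p (min b_p c_p)).trans
    (max_le h1 ((abs_min_sub_min_le_max b c b_p c_p).trans (max_le h2 h3)))
  rw [abs_le] at ha hb hc ha_p hb_p hc_p hM hm
  rcases h with h | h
  · have e : ∀ x y z : ℝ, x ≤ 1 → y ≤ 1 → z ≤ 1 → (x = 1 ∨ y = 1 ∨ z = 1) →
        max x (max y z) = 1 := by
      intro x y z hx hy hz h
      apply le_antisymm (by simp [*])
      rcases h with rfl | rfl | rfl <;> simp
    rw [e a b c ha.2 hb.2 hc.2 (by tauto), e a_p b_p c_p ha_p.2 hb_p.2 hc_p.2 (by tauto)]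
    linarith
  · have e : ∀ x y z : ℝ, -1 ≤ x → -1 ≤ y → -1 ≤ z → (x = -1 ∨ y = -1 ∨ z = -1) →
        min x (min y z) = -1 := by
      intro x y z hx hy hz h
      refine le_antisymm ?_ (by simp [*])
      rcases h with rfl | rfl | rfl <;> simp
    rw [e a b c ha.1 hb.1 hc.1 (by tauto), e a_p b_p c_p ha_p.1 hb_p.1 hc_p.1 (by tauto)]
    linarith

/-- The potential for conditions (3) and (4). -/
lemma pot2 (s3 : ℝ) (hs3 : s3 = 1 ∨ s3 = -1)
    (p : Fin 3 × Bool) (P : Fin 3 → ℝ) (hP : P ∈ cubeFace p) (Q : Fin 3 → ℝ)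
    (hQ : Q ∈ cubeFace p) :
    -(max (P 0) (max (-P 1) (s3 * P 2)) + min (P 0) (min (-P 1) (s3 * P 2)))
      + (max (Q 0) (max (-Q 1) (s3 * Q 2)) + min (Q 0) (min (-Q 1) (s3 * Q 2))) ≤ ‖P - Q‖ := by
  rw [mem_face_iff] at hP hQ
  rw [norm_sub3]
  obtain ⟨⟨p0, p1, p2⟩, p3⟩ := hP
  obtain ⟨⟨q0, q1, q2⟩, q3⟩ := hQ
  obtain ⟨l, s⟩ := p
  have h0 := le_max_left |P 0 - Q 0| (max |P 1 - Q 1| |P 2 - Q 2|)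
  have h12 := le_max_right |P 0 - Q 0| (max |P 1 - Q 1| |P 2 - Q 2|)
  have h1 := (le_max_left |P 1 - Q 1| |P 2 - Q 2|).trans h12
  have h2 := (le_max_right |P 1 - Q 1| |P 2 - Q 2|).trans h12
  generalize max |P 0 - Q 0| (max |P 1 - Q 1| |P 2 - Q 2|) = d at *
  clear h12
  have t1 : |s3| = 1 := by rcases hs3 with rfl | rfl <;> simp
  apply pot2_core
  · exact p0
  · simpa using p1
  · simpa [abs_mul, t1] using p2
  · exact q0
  · simpa using q1
  · simpa [abs_mul, t1] using q2
  · exact h0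
  · rwa [show -P 1 - -Q 1 = -(P 1 - Q 1) by ring, abs_neg]
  · rwa [← mul_sub, abs_mul, t1, one_mul]
  · rcases hs3 with rfl | rfl <;> fin_cases l <;> cases s <;> simp at p3 q3 <;> simp [p3, q3]

theorem statement5 (ay az bx bz : ℝ)
    (hay : ay ∈ Icc (-1:ℝ) 1) (haz : az ∈ Icc (-1:ℝ) 1)
    (hbx : bx ∈ Icc (-1:ℝ) 1) (hbz : bz ∈ Icc (-1:ℝ) 1) :
    (∃ z ∈ Icc (-1:ℝ) 1,
        ENNReal.ofReal (‖![1, ay, az] - ![(1:ℝ), 1, z]‖ + ‖![(1:ℝ), 1, z] - ![bx, 1, bz]‖) =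
          geoDist ![1, ay, az] ![bx, 1, bz]) ↔
      (|az| ≤ ay ∨ |bz| ≤ bx ∨ (|ay| ≤ az ∧ |bx| ≤ -bz) ∨
        (|ay| ≤ -az ∧ |bx| ≤ bz)) := by
  obtain ⟨ay1, ay2⟩ := hay
  obtain ⟨az1, az2⟩ := haz
  obtain ⟨bx1, bx2⟩ := hbx
  obtain ⟨bz1, bz2⟩ := hbz
  have fA : ![1, ay, az] ∈ cubeFace (0, true) := by
    rw [mem_face_iff]; simp [abs_le, *]
  have fB : ![bx, 1, bz] ∈ cubeFace (1, true) := by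
    rw [mem_face_iff]; simp [abs_le, *]
  constructor
  · rintro ⟨z, hz, he⟩
    have hlow : 2 - ay - bx ≤
        ‖![1, ay, az] - ![(1:ℝ), 1, z]‖ + ‖![(1:ℝ), 1, z] - ![bx, 1, bz]‖ := by
      have h1 := norm_le_pi_norm (![1, ay, az] - ![(1:ℝ), 1, z]) 1
      have h2 := norm_le_pi_norm (![(1:ℝ), 1, z] - ![bx, 1, bz]) 0
      have h1 : |ay - 1| ≤ ‖![1, ay, az] - ![(1:ℝ), 1, z]‖ := h1
      have h2 : |1 - bx| ≤ ‖![(1:ℝ), 1, z] - ![bx, 1, bz]‖ := h2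
      have h3 := neg_abs_le (ay - 1)
      have h4 := le_abs_self (1 - bx)
      linarith
    -- a path through the face `z = s`
    have via : ∀ (s : ℝ) (b : Bool), s = (if b then 1 else -1) → ay < s * az → bx < s * bz →
        False := by
      intro s b hs h1 h2
      have hs1 : |s| = 1 := by rw [hs]; split_ifs <;> simp
      have hss : s * s = 1 := by rw [hs]; split_ifs <;> simp
      have hsa : |s * az| ≤ 1 := by rw [abs_mul, hs1, one_mul, abs_le]; exact ⟨az1, az2⟩
      have hsb : |s * bz| ≤ 1 := by rw [abs_mul, hs1, one_mul, abs_le]; exact ⟨bz1, bz2⟩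
      rw [abs_le] at hsa hsb
      set P : Fin 3 → ℝ := ![1, ay + 1 - s * az, s] with hP
      set Q : Fin 3 → ℝ := ![bx + 1 - s * bz, 1, s] with hQ
      have u1 : |ay + 1 - s * az| ≤ 1 := by rw [abs_le]; constructor <;> linarith
      have u2 : |bx + 1 - s * bz| ≤ 1 := by rw [abs_le]; constructor <;> linarith
      have fP0 : P ∈ cubeFace (0, true) := by rw [mem_face_iff]; simp [hP, hs1, u1]
      have fP2 : P ∈ cubeFace (2, b) := by rw [mem_face_iff]; simp [hP, hs1, u1]; exact hs
      have fQ1 : Q ∈ cubeFace (1, true) := by rw [mem_face_iff]; simp [hQ, hs1, u2]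
      have fQ2 : Q ∈ cubeFace (2, b) := by rw [mem_face_iff]; simp [hQ, hs1, u2]; exact hs
      have k1 : ‖![1, ay, az] - P‖ ≤ 1 - s * az := by
        have e : |az - s| = |s * az - 1| := by
          rw [show s * az - 1 = s * (az - s) by linear_combination hss, abs_mul, hs1, one_mul]
        rw [norm_sub3]
        simp only [hP, Matrix.cons_val]
        rw [e]
        refine max_le ?_ (max_le ?_ ?_) <;> rw [abs_le] <;> constructor <;> linarith
      have k3 : ‖Q - ![bx, 1, bz]‖ ≤ 1 - s * bz := by
        have e : |s - bz| = |1 - s * bz| := by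
          rw [show 1 - s * bz = s * (s - bz) by linear_combination -hss, abs_mul, hs1, one_mul]
        rw [norm_sub3]
        simp only [hQ, Matrix.cons_val]
        rw [e]
        refine max_le ?_ (max_le ?_ ?_) <;> rw [abs_le] <;> constructor <;> linarith
      have k2 : ‖P - Q‖ ≤ max (s * az - ay) (s * bz - bx) := by
        rw [norm_sub3]
        simp only [hP, hQ, Matrix.cons_val]
        have m1 := le_max_left (s * az - ay) (s * bz - bx)
        have m2 := le_max_right (s * az - ay) (s * bz - bx)
        refine max_le ?_ (max_le ?_ ?_) <;> rw [abs_le] <;> constructor <;> linarith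
      have k4 : max (s * az - ay) (s * bz - bx) < (s * az - ay) + (s * bz - bx) :=
        max_lt (by linarith) (by linarith)
      have hup : geoDist ![1, ay, az] ![bx, 1, bz] ≤
          ENNReal.ofReal (‖![1, ay, az] - P‖ + (‖P - Q‖ + ‖Q - ![bx, 1, bz]‖)) := by
        rw [ENNReal.ofReal_add (by positivity) (by positivity),
          ENNReal.ofReal_add (by positivity) (by positivity)]
        exact (geoDist_triangle _ P _).trans (add_le_add (geoDist_le_segment fA fP0)
          ((geoDist_triangle _ Q _).trans (add_le_add (geoDist_le_segment fP2 fQ2)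
            (geoDist_le_segment fQ1 fB))))
      rw [← he, ENNReal.ofReal_le_ofReal_iff (by positivity)] at hup
      linarith
    by_contra hcon
    push Not at hcon
    obtain ⟨c1, c2, c3, c4⟩ := hcon
    have v1 := via 1 true (by simp)
    have v2 := via (-1) false (by simp)
    simp only [one_mul, neg_mul] at v1 v2
    rw [lt_abs] at c1 c2
    simp only [abs_le, lt_abs] at c3 c4
    by_cases a1 : ay < az
    · have b1 : bz ≤ bx := not_lt.1 fun h => v1 a1 h
      have b2 : bx < -bz := c2.resolve_left (not_lt.2 b1)
      have a2 : -az ≤ ay := not_lt.1 fun h => v2 h b2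
      rcases c3 ⟨by linarith, a1.le⟩ with h | h <;> linarith
    · have a2 : ay < -az := c1.resolve_left a1
      have b1 : -bz ≤ bx := not_lt.1 fun h => v2 a2 h
      have b2 : bx < bz := c2.resolve_right (not_lt.2 b1)
      rcases c4 ⟨by linarith, a2.le⟩ with h | h <;> linarith
  · intro hcond
    have hl1 : ENNReal.ofReal (2 - ay - bx) ≤ geoDist ![1, ay, az] ![bx, 1, bz] := by
      rcases hcond with h | h | ⟨h, h_p⟩ | ⟨h, h_p⟩
      · have := geoDist_ge (fun P => max |P 1| |P 2| - P 0) (fun i P hP Q hQ =>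
          (le_abs_self _).trans (pot1 0 1 2 (by simp) i P hP Q hQ)) ![1, ay, az] ![bx, 1, bz]
        refine le_trans (le_of_eq ?_) this
        have e1 : max |ay| |az| = ay := by
          rw [abs_of_nonneg ((abs_nonneg _).trans h), max_eq_left h]
        have e2 : max |(1:ℝ)| |bz| = 1 := by
          rw [abs_one, max_eq_left (abs_le.2 ⟨bz1, bz2⟩)]
        simp only [Matrix.cons_val, e1, e2]
        congr 1; ring
      · have := geoDist_ge (fun P => -(max |P 0| |P 2| - P 1)) (fun i P hP Q hQ => by
          have := (neg_le_abs _).trans (pot1 1 0 2 (by simp) i P hP Q hQ)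
          linarith) ![1, ay, az] ![bx, 1, bz]
        refine le_trans (le_of_eq ?_) this
        have e1 : max |bx| |bz| = bx := by
          rw [abs_of_nonneg ((abs_nonneg _).trans h), max_eq_left h]
        have e2 : max |(1:ℝ)| |az| = 1 := by
          rw [abs_one, max_eq_left (abs_le.2 ⟨az1, az2⟩)]
        simp only [Matrix.cons_val, e1, e2]
        congr 1; ring
      · have := geoDist_ge (fun P => -(max (P 0) (max (-P 1) (1 * P 2)) +
          min (P 0) (min (-P 1) (1 * P 2)))) (fun i P hP Q hQ => by
          have := pot2 1 (by simp) i P hP Q hQ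
          linarith) ![1, ay, az] ![bx, 1, bz]
        refine le_trans (le_of_eq ?_) this
        rw [abs_le] at h h_p
        have e1 : max (1:ℝ) (max (-ay) (1 * az)) = 1 := by grind
        have e2 : min (1:ℝ) (min (-ay) (1 * az)) = -ay := by grind
        have e3 : max bx (max (-1) (1 * bz)) = bx := by grind
        have e4 : min bx (min (-1) (1 * bz)) = -1 := by grind
        simp only [Matrix.cons_val, e1, e2, e3, e4]
        congr 1; ring
      · have := geoDist_ge (fun P => -(max (P 0) (max (-P 1) (-1 * P 2)) +
          min (P 0) (min (-P 1) (-1 * P 2)))) (fun i P hP Q hQ => by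
          have := pot2 (-1) (by simp) i P hP Q hQ
          linarith) ![1, ay, az] ![bx, 1, bz]
        refine le_trans (le_of_eq ?_) this
        rw [abs_le] at h h_p
        have e1 : max (1:ℝ) (max (-ay) (-1 * az)) = 1 := by grind
        have e2 : min (1:ℝ) (min (-ay) (-1 * az)) = -ay := by grind
        have e3 : max bx (max (-1) (-1 * bz)) = bx := by grind
        have e4 : min bx (min (-1) (-1 * bz)) = -1 := by grind
        simp only [Matrix.cons_val, e1, e2, e3, e4]
        congr 1; ring
    have hl2 : ENNReal.ofReal |az - bz| ≤ geoDist ![1, ay, az] ![bx, 1, bz] := by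
      refine le_trans (ENNReal.ofReal_le_ofReal ?_) (geoDist_ge_norm _ _)
      exact norm_le_pi_norm (![1, ay, az] - ![bx, 1, bz]) 2
    have hz : ∃ z ∈ Icc (-1:ℝ) 1, max (1 - ay) |az - z| + max (1 - bx) |z - bz| ≤
        max (2 - ay - bx) |az - bz| := by
      by_cases h : |az - bz| ≤ 1 - ay
      · refine ⟨bz, ⟨bz1, bz2⟩, ?_⟩
        rw [max_eq_left h, sub_self, abs_zero, max_eq_left (by linarith)]
        exact le_trans (by linarith) (le_max_left _ _)
      · push Not at h
        rcases le_total az bz with hab | hab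
        · rw [abs_of_nonpos (by linarith)] at h ⊢
          refine ⟨az + (1 - ay), ⟨by linarith, by linarith⟩, ?_⟩
          rw [abs_of_nonpos (by linarith), abs_of_nonpos (by linarith)]
          grind
        · rw [abs_of_nonneg (by linarith)] at h ⊢
          refine ⟨az - (1 - ay), ⟨by linarith, by linarith⟩, ?_⟩
          rw [abs_of_nonneg (by linarith), abs_of_nonneg (by linarith)]
          grind
    obtain ⟨z, hz, hle⟩ := hz
    refine ⟨z, hz, le_antisymm ?_ ?_⟩
    · have n1 : ‖![1, ay, az] - ![(1:ℝ), 1, z]‖ = max (1 - ay) |az - z| := by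
        rw [norm_sub3]
        simp only [Matrix.cons_val, sub_self, abs_zero]
        rw [abs_sub_comm, abs_of_nonneg (by linarith : 0 ≤ 1 - ay)]
        exact max_eq_right (by positivity)
      have n2 : ‖![(1:ℝ), 1, z] - ![bx, 1, bz]‖ = max (1 - bx) |z - bz| := by
        rw [norm_sub3]
        simp only [Matrix.cons_val, sub_self, abs_zero]
        rw [abs_of_nonneg (by linarith : 0 ≤ 1 - bx), max_eq_right (abs_nonneg (z - bz))]
      rw [n1, n2]
      refine (ENNReal.ofReal_le_ofReal hle).trans ?_
      rcases max_choice (2 - ay - bx) |az - bz| with h | h <;> rw [h]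
      · exact hl1
      · exact hl2
    · have fC : ∀ i : Fin 3, i ≠ 2 → ![1, 1, z] ∈ cubeFace (i, true) := by
        intro i hi
        rw [mem_face_iff]
        fin_cases i <;> simp [abs_le, hz.1, hz.2] at hi ⊢
      rw [ENNReal.ofReal_add (by positivity) (by positivity)]
      exact (geoDist_triangle _ ![1, 1, z] _).trans (add_le_add
        (geoDist_le_segment fA (fC 0 (by decide))) (geoDist_le_segment (fC 1 (by decide)) fB))
end
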